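/- Let ω be a measurement function and V a finite-step control Lyapunov function for time step M with afcl q, with linear decay V(x(M,ξ,q(ξ))) ≤ c·V(ξ) for all ξ ∈ X, c ∈ [0,1), and with transient bound V(g^i(ξ,q(ξ))) ≤ κ̂(V(ξ)) for i = 1,…,M−1, where κ̂ satisfies κ̂(r) ≤ q₀·max{r^a, r^b} for constants a, b, q₀ > 0. Then the classic MPC scheme (minimizing Σ_{i=0}^{N−1} V(x(i,ξ,u_N)) over admissible sequences and applying the first element of an optimal sequence at each time step) is semiglobally practically asymptotically ω-stabilizing in A := ω⁻¹(0) with respect to the optimization horizon N. -/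

import Mathlib

open Filter Finset NNReal

noncomputable section

/-- A class-K function on `[0,∞)`: continuous, strictly increasing, zero at zero. -/
def ClassK (κ : ℝ≥0 → ℝ≥0) : Prop :=
  Continuous κ ∧ StrictMono κ ∧ κ 0 = 0

/-- A class-K∞ function: class K and unbounded. -/
def ClassKInf (κ : ℝ≥0 → ℝ≥0) : Prop :=
  ClassK κ ∧ Filter.Tendsto κ Filter.atTop Filter.atTop

/-- A class-KL function. -/
def ClassKL (β : ℝ≥0 → ℝ≥0 → ℝ≥0) : Prop :=
  Continuous (fun p : ℝ≥0 × ℝ≥0 => β p.1 p.2) ∧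
  (∀ s : ℝ≥0, ClassK fun r => β r s) ∧
  (∀ r : ℝ≥0, Antitone (fun s => β r s) ∧
    Filter.Tendsto (fun s => β r s) Filter.atTop (nhds 0))

/-- The iterates `g^j(ξ, u)` of the control system `x⁺ = g(x,u)` under the
control sequence `u` starting from `ξ`. -/
def iter {n m : ℕ} (g : (Fin n → ℝ) → (Fin m → ℝ) → (Fin n → ℝ)) (ξ : Fin n → ℝ)
    (u : ℕ → Fin m → ℝ) : ℕ → Fin n → ℝ
  | 0 => ξ
  | j + 1 => g (iter g ξ u j) (u j)

/-- `q : X → U^M` is an admissible finite-step feedback control law (afcl) of length `M`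
for the system `g` with state constraint set `X`, input constraint set `U` and
measurement function `ω`. -/
def IsAfcl {n m : ℕ} (ω : (Fin n → ℝ) → ℝ≥0) (X : Set (Fin n → ℝ)) (U : Set (Fin m → ℝ))
    (g : (Fin n → ℝ) → (Fin m → ℝ) → (Fin n → ℝ)) (M : ℕ)
    (q : (Fin n → ℝ) → ℕ → Fin m → ℝ) : Prop :=
  (∀ ξ ∈ X, ∀ j < M, q ξ j ∈ U) ∧
  (∀ ξ ∈ X, ∀ j : ℕ, 1 ≤ j → j ≤ M → iter g ξ (q ξ) j ∈ X) ∧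
  (∀ j : ℕ, 1 ≤ j → j ≤ M → ∃ κ : ℝ≥0 → ℝ≥0, ClassK κ ∧
    ∀ ξ ∈ X, ω (iter g ξ (q ξ) j) ≤ κ (ω ξ))

/-- States of the closed loop under the `M`-step feedback `q` at time instants `kM`. -/
def loopBase {n m : ℕ} (g : (Fin n → ℝ) → (Fin m → ℝ) → (Fin n → ℝ)) (M : ℕ)
    (q : (Fin n → ℝ) → ℕ → Fin m → ℝ) (ξ : Fin n → ℝ) : ℕ → Fin n → ℝ
  | 0 => ξ
  | k + 1 => iter g (loopBase g M q ξ k) (q (loopBase g M q ξ k)) M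

/-- The closed-loop trajectory `x_q(t, ξ)`: for `t = kM + j`, `j ∈ {0,…,M-1}`,
`x_q(kM + j) = g^j(x_q(kM), q(x_q(kM)))`. -/
def closedLoop {n m : ℕ} (g : (Fin n → ℝ) → (Fin m → ℝ) → (Fin n → ℝ)) (M : ℕ)
    (q : (Fin n → ℝ) → ℕ → Fin m → ℝ) (ξ : Fin n → ℝ) (t : ℕ) : Fin n → ℝ :=
  iter g (loopBase g M q ξ (t / M)) (q (loopBase g M q ξ (t / M))) (t % M)

/-- A control sequence `u` of length `N` is admissible from `ξ`: all applied inputs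
lie in `U` and the resulting states remain in `X`. -/
def Adm {n m : ℕ} (X : Set (Fin n → ℝ)) (U : Set (Fin m → ℝ))
    (g : (Fin n → ℝ) → (Fin m → ℝ) → (Fin n → ℝ)) (ξ : Fin n → ℝ) (N : ℕ)
    (u : ℕ → Fin m → ℝ) : Prop :=
  ∀ j < N, u j ∈ U ∧ iter g ξ u (j + 1) ∈ X

/-- The MPC cost functional `Σ_{i=0}^{N-1} V(x(i,ξ,u))`. -/
def cost {n m : ℕ} (V : (Fin n → ℝ) → ℝ≥0)
    (g : (Fin n → ℝ) → (Fin m → ℝ) → (Fin n → ℝ)) (N : ℕ) (ξ : Fin n → ℝ)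
    (u : ℕ → Fin m → ℝ) : ℝ≥0 :=
  ∑ i ∈ Finset.range N, V (iter g ξ u i)

/-- `uopt` is a selection of optimal control sequences for the horizon-`N`
optimal control problem with running cost `V`. -/
def IsOptSel {n m : ℕ} (X : Set (Fin n → ℝ)) (U : Set (Fin m → ℝ))
    (g : (Fin n → ℝ) → (Fin m → ℝ) → (Fin n → ℝ)) (V : (Fin n → ℝ) → ℝ≥0) (N : ℕ)
    (uopt : (Fin n → ℝ) → ℕ → Fin m → ℝ) : Prop :=
  ∀ ξ ∈ X, Adm X U g ξ N (uopt ξ) ∧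
    ∀ u : ℕ → Fin m → ℝ, Adm X U g ξ N u → cost V g N ξ (uopt ξ) ≤ cost V g N ξ u

/-- The MPC closed loop: at every time step apply the first element of the
(selected) optimal control sequence. -/
def mpcLoop {n m : ℕ} (g : (Fin n → ℝ) → (Fin m → ℝ) → (Fin n → ℝ))
    (uopt : (Fin n → ℝ) → ℕ → Fin m → ℝ) (ξ : Fin n → ℝ) : ℕ → Fin n → ℝ
  | 0 => ξ
  | t + 1 => g (mpcLoop g uopt ξ t) (uopt (mpcLoop g uopt ξ t) 0)

/-!
Finite-step decay and the power bound on the transients make the costs of the successive blocks of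
length `M` sum up like geometric series, so from `ξ` the total cost over any horizon can be kept
below `ρ (V ξ)` for one class-K function `ρ`. Some state in the tail of an optimal sequence of
length `N` therefore has `V` of order `1 / N`, and continuing cheaply from there shows that one MPC
step changes the optimal cost `J` according to `J⁺ + V ≤ J + ε`, where `ε → 0` as `N → ∞`. As long
as `V ≥ 2 ε`, this is a decrease by at least `V / 2`, so `V ≤ 2 J₀ / (t + 1)` at some time `s ≤ t`
and `J t ≤ J s ≤ ρ (2 J₀ / (t + 1))`; once `V < 2 ε`, `J` stays below `ρ (2 ε) + ε`.
-/

section ComparisonFunctions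

namespace ClassK

variable {κ γ : ℝ≥0 → ℝ≥0}

protected theorem comp (hκ : ClassK κ) (hγ : ClassK γ) : ClassK (κ ∘ γ) :=
  ⟨hκ.1.comp hγ.1, hκ.2.1.comp hγ.2.1, by rw [Function.comp_apply, hγ.2.2, hκ.2.2]⟩

protected theorem add (hκ : ClassK κ) (hγ : ClassK γ) : ClassK (κ + γ) :=
  ⟨hκ.1.add hγ.1, hκ.2.1.add hγ.2.1, by rw [Pi.add_apply, hκ.2.2, hγ.2.2, add_zero]⟩

protected theorem id : ClassK id :=
  ⟨continuous_id, strictMono_id, rfl⟩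

theorem const_mul {C : ℝ≥0} (hC : 0 < C) : ClassK (C * ·) :=
  ⟨continuous_const_mul C, fun _ _ h => mul_lt_mul_of_pos_left h hC, mul_zero C⟩

theorem rpow_const {a : ℝ} (ha : 0 < a) : ClassK (· ^ a) :=
  ⟨NNReal.continuous_rpow_const ha.le, NNReal.strictMono_rpow_of_pos ha, NNReal.zero_rpow ha.ne'⟩

theorem tendsto_comp_zero (hκ : ClassK κ) {ι : Type*} {l : Filter ι} {f : ι → ℝ≥0}
    (hf : Tendsto f l (nhds 0)) : Tendsto (fun i => κ (f i)) l (nhds 0) :=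
  (hκ.1.tendsto' 0 0 hκ.2.2).comp hf

theorem exists_pos_le (hκ : ClassK κ) {η : ℝ≥0} (hη : 0 < η) : ∃ ε, 0 < ε ∧ κ ε ≤ η := by
  have hsmall : ∀ᶠ ε in nhdsWithin 0 (Set.Ioi 0), κ ε ≤ η :=
    (hκ.tendsto_comp_zero (tendsto_id.mono_left nhdsWithin_le_nhds)).eventually_le_const hη
  exact (eventually_mem_nhdsWithin.and hsmall).exists

theorem classKL_div_add_one (hκ : ClassK κ) (hγ : ClassK γ) :
    ClassKL fun r s => κ (γ r / (s + 1)) := by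
  have hγc := hγ.1
  refine ⟨hκ.1.comp (Continuous.div (by fun_prop) (by fun_prop) fun p => by positivity),
    fun s => ⟨hκ.1.comp (by fun_prop), hκ.2.1.comp fun r r' hr => ?_, ?_⟩,
    fun r => ⟨hκ.2.1.monotone.comp_antitone fun s s' hs => ?_, hκ.tendsto_comp_zero ?_⟩⟩
  · exact div_lt_div_of_pos_right (hγ.2.1 hr) (by positivity)
  · simp only [hγ.2.2, zero_div, hκ.2.2]
  · gcongr
  · have hinv : Tendsto (fun s : ℝ≥0 => (s + 1)⁻¹) atTop (nhds 0) :=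
      tendsto_inv_atTop_zero.comp (tendsto_atTop_mono (fun _ => le_self_add) tendsto_id)
    simpa only [div_eq_mul_inv, mul_zero] using hinv.const_mul (γ r)

end ClassK

theorem ClassKInf.surjective {κ : ℝ≥0 → ℝ≥0} (hκ : ClassKInf κ) : Function.Surjective κ := by
  refine hκ.1.1.surjective hκ.2 ?_
  have hbot : κ ⊥ = ⊥ := hκ.1.2.2
  simpa only [OrderBot.atBot_eq, hbot] using tendsto_pure_pure κ ⊥

theorem ClassKInf.exists_classK_galoisConnection {κ : ℝ≥0 → ℝ≥0} (hκ : ClassKInf κ) :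
    ∃ κinv, ClassK κinv ∧ GaloisConnection κ κinv := by
  let e : ℝ≥0 ≃o ℝ≥0 := hκ.1.2.1.orderIsoOfSurjective κ hκ.surjective
  exact ⟨e.symm, ⟨e.symm.continuous, e.symm.strictMono, e.symm.map_bot⟩, e.to_galoisConnection⟩

theorem add_div_one_sub_mul_le {d L x y z : ℝ≥0} (hd : d < 1) (hx : x ≤ L * z) (hy : y ≤ d * z) :
    x + L / (1 - d) * y ≤ L / (1 - d) * z := by
  have hsub : 1 - d ≠ 0 := (tsub_pos_of_lt hd).ne'
  calc x + L / (1 - d) * y ≤ L / (1 - d) * (1 - d) * z + L / (1 - d) * (d * z) := by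
        rw [div_mul_cancel₀ _ hsub]
        gcongr
    _ = L / (1 - d) * ((1 - d) + d) * z := by ring
    _ = L / (1 - d) * z := by rw [tsub_add_cancel_of_le hd.le, mul_one]

theorem exists_classK_mul_add_comp_mul_le {c C q₀ : ℝ≥0} (hc : c < 1) (hC : 0 < C) {a b : ℝ}
    (ha : 0 < a) (hb : 0 < b) :
    ∃ ρ, ClassK ρ ∧ ∀ r, C * (r + q₀ * max (r ^ a) (r ^ b)) + ρ (c * r) ≤ ρ r := by
  let σ : ℝ≥0 → ℝ≥0 := fun r => r + r ^ a + r ^ b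
  let d := max c (max (c ^ a) (c ^ b))
  have hσ : ClassK σ := (ClassK.id.add (ClassK.rpow_const ha)).add (ClassK.rpow_const hb)
  have hd : d < 1 := max_lt hc (max_lt (NNReal.rpow_lt_one hc ha) (NNReal.rpow_lt_one hc hb))
  have hscale (r) : σ (c * r) ≤ d * σ r := by
    simp only [σ, NNReal.mul_rpow, mul_add]
    gcongr
    exacts [le_max_left _ _, le_max_of_le_right (le_max_left _ _),
      le_max_of_le_right (le_max_right _ _)]
  have hbound (r) : C * (r + q₀ * max (r ^ a) (r ^ b)) ≤ C * (1 + q₀) * σ r := by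
    have hmax : max (r ^ a) (r ^ b) ≤ σ r :=
      max_le (le_add_self.trans le_self_add) le_add_self
    calc C * (r + q₀ * max (r ^ a) (r ^ b)) ≤ C * (σ r + q₀ * σ r) := by
          gcongr
          exact le_self_add.trans le_self_add
      _ = C * (1 + q₀) * σ r := by ring
  have hcoeff : 0 < C * (1 + q₀) / (1 - d) := div_pos (by positivity) (tsub_pos_of_lt hd)
  exact ⟨_, (ClassK.const_mul hcoeff).comp hσ,
    fun r => add_div_one_sub_mul_le hd (hbound r) (hscale r)⟩

end ComparisonFunctions

section DissipativeSequences

theorem le_or_add_half_le {ρ : ℝ≥0 → ℝ≥0} (hρ : Monotone ρ) {J J' v ε η : ℝ≥0}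
    (hη : ρ (2 * ε) + ε ≤ η) (hJ : J ≤ ρ v) (hstep : J' + v ≤ J + ε) :
    J' ≤ η ∨ J' + v / 2 ≤ J := by
  rcases le_total v (2 * ε) with hv | hv
  · left
    calc J' ≤ J + ε := le_self_add.trans hstep
      _ ≤ ρ (2 * ε) + ε := by
        gcongr
        exact hJ.trans (hρ hv)
      _ ≤ η := hη
  · right
    rw [← NNReal.coe_le_coe] at hstep hv ⊢
    push_cast at hstep hv ⊢
    linarith

variable {J v : ℕ → ℝ≥0} {η : ℝ≥0}

theorem le_or_forall_le_and_add_sum_half_le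
    (hstep : ∀ t, J (t + 1) ≤ η ∨ J (t + 1) + v t / 2 ≤ J t) (t : ℕ) :
    J t ≤ η ∨ (∀ s ≤ t, J t ≤ J s) ∧ J t + ∑ s ∈ range t, v s / 2 ≤ J 0 := by
  induction t with
  | zero => simp
  | succ t ih =>
    rcases hstep t with hsmall | hdec
    · exact .inl hsmall
    have hle : J (t + 1) ≤ J t := le_self_add.trans hdec
    refine ih.imp hle.trans fun ⟨hmin, hsum⟩ => ⟨fun s hs => ?_, ?_⟩
    · obtain rfl | hs := hs.eq_or_lt
      · exact le_rfl
      · exact hle.trans (hmin s (Nat.le_of_lt_succ hs))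
    · calc J (t + 1) + ∑ s ∈ range (t + 1), v s / 2
          = J (t + 1) + v t / 2 + ∑ s ∈ range t, v s / 2 := by rw [sum_range_succ]; ring
        _ ≤ J t + ∑ s ∈ range t, v s / 2 := by gcongr
        _ ≤ J 0 := hsum

theorem le_max_of_forall_le_or_add_half_le {ρ : ℝ≥0 → ℝ≥0} (hρ : Monotone ρ) {K : ℝ≥0}
    (hηK : η ≤ K) (hJ0 : J 0 ≤ K) (hvJ : ∀ t, v t ≤ J t) (hJv : ∀ t, J t ≤ ρ (v t))
    (hstep : ∀ t, J t ≤ K → J (t + 1) ≤ η ∨ J (t + 1) + v t / 2 ≤ J t) (t : ℕ) :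
    J t ≤ max (ρ (2 * (J 0 / (t + 1)))) η := by
  have hJK (t) : J t ≤ K := by
    induction t with
    | zero => exact hJ0
    | succ t ih =>
      exact (hstep t ih).elim hηK.trans' fun hdec => (le_self_add.trans hdec).trans ih
  rcases le_or_forall_le_and_add_sum_half_le (fun t => hstep t (hJK t)) t with
    hsmall | ⟨hmin, hsum⟩
  · exact le_max_of_le_right hsmall
  · have hvsum : ∑ s ∈ range (t + 1), v s / 2 ≤ J 0 := by
      rw [sum_range_succ, add_comm]
      grw [← hsum, hvJ t, NNReal.half_le_self]
    obtain ⟨s, hs, hvs⟩ := exists_le_of_expect_le nonempty_range_add_one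
      (expect_eq_sum_div_card (range (t + 1)) (v · / 2)).le
    rw [card_range, Nat.cast_add_one] at hvs
    refine le_max_of_le_left ?_
    calc J t ≤ J s := hmin s (mem_range_succ_iff.1 hs)
      _ ≤ ρ (v s) := hJv s
      _ = ρ (2 * (v s / 2)) := by rw [mul_div_cancel₀ _ two_ne_zero]
      _ ≤ ρ (2 * (J 0 / (t + 1))) := by
        refine hρ ?_
        grw [hvs, hvsum]

end DissipativeSequences

section ControlSequences

variable {n m : ℕ} {X : Set (Fin n → ℝ)} {U : Set (Fin m → ℝ)}
  {g : (Fin n → ℝ) → (Fin m → ℝ) → (Fin n → ℝ)} {V : (Fin n → ℝ) → ℝ≥0} {ξ : Fin n → ℝ}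
  {u v : ℕ → Fin m → ℝ} {k l N : ℕ}

theorem iter_succ' (g : (Fin n → ℝ) → (Fin m → ℝ) → (Fin n → ℝ)) (ξ : Fin n → ℝ)
    (u : ℕ → Fin m → ℝ) (j : ℕ) :
    iter g ξ u (j + 1) = iter g (g ξ (u 0)) (fun i => u (i + 1)) j := by
  induction j with
  | zero => rfl
  | succ j ih => rw [iter, ih, iter]

theorem cost_succ' (V : (Fin n → ℝ) → ℝ≥0) (g : (Fin n → ℝ) → (Fin m → ℝ) → (Fin n → ℝ))
    (N : ℕ) (ξ : Fin n → ℝ) (u : ℕ → Fin m → ℝ) :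
    cost V g (N + 1) ξ u = cost V g N (g ξ (u 0)) (fun i => u (i + 1)) + V ξ := by
  simp only [cost, sum_range_succ', iter_succ']
  rfl

theorem cost_mono (hkl : k ≤ l) : cost V g k ξ u ≤ cost V g l ξ u :=
  sum_le_sum_of_subset (range_mono hkl)

theorem cost_le_mul {B : ℝ≥0} (hB : ∀ i < N, V (iter g ξ u i) ≤ B) : cost V g N ξ u ≤ N * B := by
  simpa only [cost, card_range, nsmul_eq_mul] using
    sum_le_card_nsmul (range N) _ B fun i hi => hB i (mem_range.1 hi)

theorem exists_iter_le_cost_div (V : (Fin n → ℝ) → ℝ≥0)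
    (g : (Fin n → ℝ) → (Fin m → ℝ) → (Fin n → ℝ)) (hN : 0 < N) (ξ : Fin n → ℝ)
    (u : ℕ → Fin m → ℝ) : ∃ k < N, V (iter g ξ u k) ≤ cost V g N ξ u / N := by
  simpa only [cost, mem_range, card_range] using
    exists_le_of_expect_le (nonempty_range_iff.2 hN.ne')
    (expect_eq_sum_div_card (range N) fun i => V (iter g ξ u i)).le

/-- Concatenation of control sequences: the first `k` inputs of `u`, followed by those of `v`. -/
def concat (k : ℕ) (u v : ℕ → Fin m → ℝ) : ℕ → Fin m → ℝ :=
  fun i => if i < k then u i else v (i - k)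

theorem concat_of_lt (u v : ℕ → Fin m → ℝ) {i : ℕ} (hi : i < k) : concat k u v i = u i :=
  if_pos hi

theorem concat_add (k : ℕ) (u v : ℕ → Fin m → ℝ) (i : ℕ) : concat k u v (k + i) = v i := by
  simp only [concat, add_lt_iff_neg_left, not_lt_zero, if_false, add_tsub_cancel_left]

theorem iter_concat_of_le (g : (Fin n → ℝ) → (Fin m → ℝ) → (Fin n → ℝ)) (ξ : Fin n → ℝ)
    (u v : ℕ → Fin m → ℝ) {j : ℕ} (hj : j ≤ k) :
    iter g ξ (concat k u v) j = iter g ξ u j := by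
  induction j with
  | zero => rfl
  | succ j ih => rw [iter, ih (Nat.le_of_succ_le hj), concat_of_lt u v hj, iter]

theorem iter_concat_add (g : (Fin n → ℝ) → (Fin m → ℝ) → (Fin n → ℝ)) (ξ : Fin n → ℝ)
    (k : ℕ) (u v : ℕ → Fin m → ℝ) (j : ℕ) :
    iter g ξ (concat k u v) (k + j) = iter g (iter g ξ u k) v j := by
  induction j with
  | zero => exact iter_concat_of_le g ξ u v le_rfl
  | succ j ih => rw [← add_assoc, iter, ih, concat_add, iter]

theorem cost_concat (V : (Fin n → ℝ) → ℝ≥0) (g : (Fin n → ℝ) → (Fin m → ℝ) → (Fin n → ℝ))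
    (k l : ℕ) (ξ : Fin n → ℝ) (u v : ℕ → Fin m → ℝ) :
    cost V g (k + l) ξ (concat k u v) = cost V g k ξ u + cost V g l (iter g ξ u k) v := by
  simp only [cost, sum_range_add, iter_concat_add]
  congr 1
  exact sum_congr rfl fun i hi => by rw [iter_concat_of_le g ξ u v (mem_range.1 hi).le]

namespace Adm

theorem mono (hkl : k ≤ l) (hu : Adm X U g ξ l u) : Adm X U g ξ k u :=
  fun j hj => hu j (hj.trans_le hkl)

theorem iter_mem (hu : Adm X U g ξ N u) (hξ : ξ ∈ X) {j : ℕ} (hj : j ≤ N) : iter g ξ u j ∈ X := by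
  cases j with
  | zero => exact hξ
  | succ j => exact (hu j hj).2

theorem tail (hu : Adm X U g ξ (N + 1) u) : Adm X U g (g ξ (u 0)) N fun i => u (i + 1) :=
  fun j hj => iter_succ' g ξ u (j + 1) ▸ hu (j + 1) (Nat.succ_lt_succ hj)

theorem concat (hu : Adm X U g ξ k u) (hv : Adm X U g (iter g ξ u k) l v) :
    Adm X U g ξ (k + l) (concat k u v) := by
  intro j hj
  rcases lt_or_ge j k with hjk | hkj
  · rw [concat_of_lt u v hjk, iter_concat_of_le g ξ u v hjk]
    exact hu j hjk
  · obtain ⟨i, rfl⟩ := Nat.exists_eq_add_of_le hkj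
    rw [concat_add, add_assoc, iter_concat_add]
    exact hv i (Nat.lt_of_add_lt_add_left hj)

end Adm

theorem IsAfcl.adm {ω : (Fin n → ℝ) → ℝ≥0} {M : ℕ} {q : (Fin n → ℝ) → ℕ → Fin m → ℝ}
    (hq : IsAfcl ω X U g M q) (hξ : ξ ∈ X) : Adm X U g ξ M (q ξ) :=
  fun j hj => ⟨hq.1 ξ hξ j hj, hq.2.1 ξ hξ (j + 1) (Nat.succ_pos j) hj⟩

end ControlSequences

section CostControllability

variable {n m : ℕ} {X : Set (Fin n → ℝ)} {U : Set (Fin m → ℝ)}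
  {g : (Fin n → ℝ) → (Fin m → ℝ) → (Fin n → ℝ)} {V : (Fin n → ℝ) → ℝ≥0} {ρ : ℝ≥0 → ℝ≥0}
  {uopt : (Fin n → ℝ) → ℕ → Fin m → ℝ} {ξ : Fin n → ℝ} {N : ℕ}

/-- Cost controllability: from each state `ξ ∈ X`, the total cost can be kept below `ρ (V ξ)` by
admissible control sequences, with a bound `ρ` that is uniform in the horizon. -/
def IsCostControllable (X : Set (Fin n → ℝ)) (U : Set (Fin m → ℝ))
    (g : (Fin n → ℝ) → (Fin m → ℝ) → (Fin n → ℝ)) (V : (Fin n → ℝ) → ℝ≥0)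
    (ρ : ℝ≥0 → ℝ≥0) : Prop :=
  ∀ N, ∀ ξ ∈ X, ∃ u, Adm X U g ξ N u ∧ cost V g N ξ u ≤ ρ (V ξ)

theorem isCostControllable_of_finiteStepDecay (hρ : Monotone ρ) {M : ℕ} (hM : 0 < M)
    {q : (Fin n → ℝ) → ℕ → Fin m → ℝ} {α κ : ℝ≥0 → ℝ≥0} (hq : ∀ ξ ∈ X, Adm X U g ξ M (q ξ))
    (hdecay : ∀ ξ ∈ X, V (iter g ξ (q ξ) M) ≤ α (V ξ))
    (htransient : ∀ ξ ∈ X, ∀ i < M, V (iter g ξ (q ξ) i) ≤ κ (V ξ))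
    (hρκ : ∀ r, M * κ r + ρ (α r) ≤ ρ r) : IsCostControllable X U g V ρ := by
  intro N
  have hblock (ξ) (hξ : ξ ∈ X) : cost V g M ξ (q ξ) ≤ M * κ (V ξ) := cost_le_mul (htransient ξ hξ)
  induction N using Nat.strong_induction_on with
  | h N ih =>
    intro ξ hξ
    rcases le_or_gt N M with hNM | hMN
    · exact ⟨q ξ, (hq ξ hξ).mono hNM,
        (cost_mono hNM).trans ((hblock ξ hξ).trans (le_self_add.trans (hρκ _)))⟩
    · obtain ⟨l, rfl⟩ := Nat.exists_eq_add_of_le hMN.le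
      obtain ⟨v, hv, hcost⟩ := ih l (by omega) _ ((hq ξ hξ).iter_mem hξ le_rfl)
      refine ⟨concat M (q ξ) v, (hq ξ hξ).concat hv, ?_⟩
      calc cost V g (M + l) ξ (concat M (q ξ) v)
          = cost V g M ξ (q ξ) + cost V g l (iter g ξ (q ξ) M) v := cost_concat ..
        _ ≤ M * κ (V ξ) + ρ (α (V ξ)) :=
          add_le_add (hblock ξ hξ) (hcost.trans (hρ (hdecay ξ hξ)))
        _ ≤ ρ (V ξ) := hρκ _

theorem IsOptSel.cost_le_of_isCostControllable (hopt : IsOptSel X U g V N uopt)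
    (hctrl : IsCostControllable X U g V ρ) (hξ : ξ ∈ X) :
    cost V g N ξ (uopt ξ) ≤ ρ (V ξ) := by
  obtain ⟨u, hu, hcost⟩ := hctrl N ξ hξ
  exact ((hopt ξ hξ).2 u hu).trans hcost

theorem IsOptSel.step_mem (hopt : IsOptSel X U g V (N + 1) uopt) (hξ : ξ ∈ X) :
    g ξ (uopt ξ 0) ∈ X :=
  ((hopt ξ hξ).1 0 N.succ_pos).2

theorem IsOptSel.mpcLoop_mem (hopt : IsOptSel X U g V (N + 1) uopt) (hξ : ξ ∈ X) (t : ℕ) :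
    mpcLoop g uopt ξ t ∈ X := by
  induction t with
  | zero => exact hξ
  | succ t ih => exact hopt.step_mem ih

theorem IsCostControllable.exists_adm_cost_le (hctrl : IsCostControllable X U g V ρ)
    (hρ : Monotone ρ) (hN : 0 < N) {N' : ℕ} (hNN' : N ≤ N') {u : ℕ → Fin m → ℝ} (hξ : ξ ∈ X)
    (hu : Adm X U g ξ N u) :
    ∃ v, Adm X U g ξ N' v ∧ cost V g N' ξ v ≤ cost V g N ξ u + ρ (cost V g N ξ u / N) := by
  obtain ⟨k, hkN, hk⟩ := exists_iter_le_cost_div V g hN ξ u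
  obtain ⟨l, rfl⟩ := Nat.exists_eq_add_of_le (hkN.le.trans hNN')
  obtain ⟨w, hw, hcost⟩ := hctrl l _ (hu.iter_mem hξ hkN.le)
  refine ⟨concat k u w, (hu.mono hkN.le).concat hw, ?_⟩
  rw [cost_concat]
  exact add_le_add (cost_mono hkN.le) (hcost.trans (hρ hk))

theorem IsOptSel.cost_step_add_le (hopt : IsOptSel X U g V (N + 1) uopt)
    (hctrl : IsCostControllable X U g V ρ) (hρ : Monotone ρ) (hN : 0 < N) (hξ : ξ ∈ X) :
    cost V g (N + 1) (g ξ (uopt ξ 0)) (uopt (g ξ (uopt ξ 0))) + V ξ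
      ≤ cost V g (N + 1) ξ (uopt ξ) + ρ (cost V g (N + 1) ξ (uopt ξ) / N) := by
  have hmem := hopt.step_mem hξ
  obtain ⟨v, hv, hcost⟩ :=
    hctrl.exists_adm_cost_le hρ hN N.le_succ hmem (hopt ξ hξ).1.tail
  rw [cost_succ' V g N ξ]
  set J := cost V g N (g ξ (uopt ξ 0)) fun i => uopt ξ (i + 1)
  calc cost V g (N + 1) (g ξ (uopt ξ 0)) (uopt (g ξ (uopt ξ 0))) + V ξ
      ≤ J + ρ (J / N) + V ξ := by
        gcongr
        exact ((hopt _ hmem).2 v hv).trans hcost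
    _ = J + V ξ + ρ (J / N) := add_right_comm ..
    _ ≤ J + V ξ + ρ ((J + V ξ) / N) := by
        gcongr
        exact hρ (by gcongr; exact le_self_add)

theorem IsOptSel.mpcLoop_le_max (hopt : IsOptSel X U g V (N + 1) uopt)
    (hctrl : IsCostControllable X U g V ρ) (hρ : Monotone ρ) (hN : 0 < N) {ε η K : ℝ≥0}
    (hη : ρ (2 * ε) + ε ≤ η) (hηK : η ≤ K) (hK : ρ (K / N) ≤ ε) (hξ : ξ ∈ X)
    (hξK : ρ (V ξ) ≤ K) (t : ℕ) :
    V (mpcLoop g uopt ξ t) ≤ max (ρ (2 * (ρ (V ξ) / (t + 1)))) η := by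
  let J : ℕ → ℝ≥0 := fun t => cost V g (N + 1) (mpcLoop g uopt ξ t) (uopt (mpcLoop g uopt ξ t))
  have hmem := hopt.mpcLoop_mem hξ
  have hJ (t) : J t ≤ ρ (V (mpcLoop g uopt ξ t)) :=
    hopt.cost_le_of_isCostControllable hctrl (hmem t)
  have hV (t) : V (mpcLoop g uopt ξ t) ≤ J t :=
    le_add_self.trans_eq (cost_succ' V g N _ _).symm
  have hstep (t) (ht : J t ≤ K) : J (t + 1) ≤ η ∨ J (t + 1) + V (mpcLoop g uopt ξ t) / 2 ≤ J t := by
    have herror : ρ (J t / N) ≤ ε := (hρ (by gcongr)).trans hK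
    refine le_or_add_half_le hρ hη (hJ t) ?_
    exact (hopt.cost_step_add_le hctrl hρ hN (hmem t)).trans (by gcongr)
  have hJ0 : J 0 ≤ ρ (V ξ) := hJ 0
  calc V (mpcLoop g uopt ξ t) ≤ J t := hV t
    _ ≤ max (ρ (2 * (J 0 / (t + 1)))) η :=
      le_max_of_forall_le_or_add_half_le hρ hηK (hJ0.trans hξK) hV hJ hstep t
    _ ≤ max (ρ (2 * (ρ (V ξ) / (t + 1)))) η := max_le_max_right η (hρ (by gcongr))

end CostControllability

section Stability

/-- Semiglobal practical asymptotic `ω`-stability on `X` with respect to the parameter `N`, where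
`x N ξ t` is the state at time `t` of the trajectory of the `N`-th system started in `ξ`. -/
def SemigloballyPracticallyStable {S : Type*} (X : Set S) (ω : S → ℝ≥0) (x : ℕ → S → ℕ → S) :
    Prop :=
  ∃ β, ClassKL β ∧ ∀ δ, 0 < δ → ∀ Δ, δ < Δ → ∃ N₀, 1 ≤ N₀ ∧ ∀ N, N₀ ≤ N → ∀ ξ ∈ X, ω ξ < Δ →
    ∀ t : ℕ, ω (x N ξ t) ≤ max (β (ω ξ) t) δ

variable {n m : ℕ} {X : Set (Fin n → ℝ)} {U : Set (Fin m → ℝ)}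
  {g : (Fin n → ℝ) → (Fin m → ℝ) → (Fin n → ℝ)} {ω V : (Fin n → ℝ) → ℝ≥0}
  {ulα olα : ℝ≥0 → ℝ≥0} {uopt : ℕ → (Fin n → ℝ) → ℕ → Fin m → ℝ}

theorem IsCostControllable.semigloballyPracticallyStable_mpcLoop {ρ : ℝ≥0 → ℝ≥0}
    (hctrl : IsCostControllable X U g V ρ) (hρ : ClassK ρ) (hulα : ClassKInf ulα)
    (holα : ClassK olα) (hsandwich : ∀ ξ ∈ X, ulα (ω ξ) ≤ V ξ ∧ V ξ ≤ olα (ω ξ))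
    (hopt : ∀ N, 1 ≤ N → IsOptSel X U g V N (uopt N)) :
    SemigloballyPracticallyStable X ω fun N => mpcLoop g (uopt N) := by
  obtain ⟨ulαinv, hulαinv, hgalois⟩ := hulα.exists_classK_galoisConnection
  have hρ2 : ClassK (ρ ∘ (2 * ·)) := hρ.comp (ClassK.const_mul two_pos)
  refine ⟨_, (hulαinv.comp hρ2).classKL_div_add_one (hρ.comp holα), fun δ hδ Δ _ => ?_⟩
  have hulαδ : 0 < ulα δ := hulα.1.2.2 ▸ hulα.1.2.1 hδ
  obtain ⟨ε, hε, hη⟩ := (hρ2.add ClassK.id).exists_pos_le hulαδ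
  let K := max (ρ (olα Δ)) (ulα δ)
  obtain ⟨N₁, hN₁⟩ := eventually_atTop.1 <|
    (hρ.tendsto_comp_zero (tendsto_const_div_atTop_nhds_zero_nat K)).eventually_le_const hε
  refine ⟨N₁ + 2, by omega, fun N hN ξ hξ hξΔ t => ?_⟩
  obtain ⟨N, rfl⟩ := Nat.exists_eq_add_of_le' (show 1 ≤ N by omega)
  have hmono := hρ.2.1.monotone
  have hopt' := hopt (N + 1) N.succ_pos
  have hVρ : ρ (V ξ) ≤ ρ (olα (ω ξ)) := hmono (hsandwich ξ hξ).2
  have hξK : ρ (V ξ) ≤ K :=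
    le_max_of_le_left (hVρ.trans (hmono (holα.2.1.monotone hξΔ.le)))
  have hω := calc
    ulα (ω (mpcLoop g (uopt (N + 1)) ξ t)) ≤ V (mpcLoop g (uopt (N + 1)) ξ t) :=
      (hsandwich _ (hopt'.mpcLoop_mem hξ t)).1
    _ ≤ max (ρ (2 * (ρ (V ξ) / (t + 1)))) (ulα δ) :=
      hopt'.mpcLoop_le_max hctrl hmono (by omega) hη (le_max_right _ _)
        (hN₁ N (by omega)) hξ hξK t
    _ ≤ max (ρ (2 * (ρ (olα (ω ξ)) / (t + 1)))) (ulα δ) :=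
      max_le_max_right _ (hmono (by gcongr))
  exact (le_max_iff.1 hω).elim (fun h => le_max_of_le_left (hgalois.le_u h))
    fun h => le_max_of_le_right (hulα.1.2.1.le_iff_le.1 h)

theorem mpc_power_transient_practically_stable_general {M : ℕ} (hM : 1 ≤ M)
    (hulα : ClassKInf ulα) (holα : ClassK olα)
    (hsandwich : ∀ ξ ∈ X, ulα (ω ξ) ≤ V ξ ∧ V ξ ≤ olα (ω ξ))
    {q : (Fin n → ℝ) → ℕ → Fin m → ℝ} (hq : ∀ ξ ∈ X, Adm X U g ξ M (q ξ))
    {c : ℝ≥0} (hc : c < 1) (hdecay : ∀ ξ ∈ X, V (iter g ξ (q ξ) M) ≤ c * V ξ)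
    {κhat : ℝ≥0 → ℝ≥0}
    (htransient : ∀ ξ ∈ X, ∀ i : ℕ, 1 ≤ i → i < M → V (iter g ξ (q ξ) i) ≤ κhat (V ξ))
    {a b : ℝ} {q₀ : ℝ≥0} (ha : 0 < a) (hb : 0 < b)
    (hκhat : ∀ r : ℝ≥0, κhat r ≤ q₀ * max (r ^ a) (r ^ b))
    (hopt : ∀ N : ℕ, 1 ≤ N → IsOptSel X U g V N (uopt N)) :
    SemigloballyPracticallyStable X ω fun N => mpcLoop g (uopt N) := by
  obtain ⟨ρ, hρ, hρκ⟩ :=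
    exists_classK_mul_add_comp_mul_le (q₀ := q₀) hc (Nat.cast_pos.2 hM) ha hb
  refine IsCostControllable.semigloballyPracticallyStable_mpcLoop
    (isCostControllable_of_finiteStepDecay hρ.2.1.monotone hM hq hdecay (fun ξ hξ i hi => ?_) hρκ)
    hρ hulα holα hsandwich hopt
  rcases i.eq_zero_or_pos with rfl | hpos
  · exact le_self_add
  · exact ((htransient ξ hξ i hpos hi).trans (hκhat _)).trans le_add_self

end Stability

/-- (Theorem (ii): with linear decay `c ∈ [0,1)` and transient bound
`κ̂(r) ≤ q₀·max{r^a, r^b}`, the classic MPC scheme is semiglobally practically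
asymptotically ω-stabilizing w.r.t. the optimization horizon `N`). -/
theorem mpc_power_transient_practically_stable {n m : ℕ}
    (X : Set (Fin n → ℝ)) (U : Set (Fin m → ℝ))
    (g : (Fin n → ℝ) → (Fin m → ℝ) → (Fin n → ℝ))
    (hg : ContinuousOn (fun p : (Fin n → ℝ) × (Fin m → ℝ) => g p.1 p.2) (X ×ˢ U))
    (ω : (Fin n → ℝ) → ℝ≥0) (hω : Continuous ω) (hωzero : ∃ x, ω x = 0)
    (M : ℕ) (hM : 1 ≤ M)
    (V : (Fin n → ℝ) → ℝ≥0) (hV : Continuous V)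
    (ulα olα : ℝ≥0 → ℝ≥0) (hulα : ClassKInf ulα) (holα : ClassKInf olα)
    (hsandwich : ∀ ξ, ulα (ω ξ) ≤ V ξ ∧ V ξ ≤ olα (ω ξ))
    (q : (Fin n → ℝ) → ℕ → Fin m → ℝ) (hq : IsAfcl ω X U g M q)
    -- linear decay along the afcl `q`
    (c : ℝ≥0) (hc : c < 1)
    (hdecay : ∀ ξ ∈ X, V (iter g ξ (q ξ) M) ≤ c * V ξ)
    -- transient bound `V(g^i(ξ,q(ξ))) ≤ κ̂(V(ξ))` with `κ̂(r) ≤ q₀·max{r^a, r^b}`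
    (κhat : ℝ≥0 → ℝ≥0)
    (htransient : ∀ ξ ∈ X, ∀ i : ℕ, 1 ≤ i → i < M → V (iter g ξ (q ξ) i) ≤ κhat (V ξ))
    (a b : ℝ) (q₀ : ℝ≥0) (ha : 0 < a) (hb : 0 < b) (hq₀ : 0 < q₀)
    (hκhat : ∀ r : ℝ≥0, κhat r ≤ q₀ * max (r ^ a) (r ^ b))
    -- a selection of optimal control sequences for every horizon `N ∈ ℕ*`
    (uopt : ℕ → (Fin n → ℝ) → ℕ → Fin m → ℝ)
    (hopt : ∀ N : ℕ, 1 ≤ N → IsOptSel X U g V N (uopt N)) :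
    -- semiglobal practical asymptotic ω-stabilization w.r.t. the horizon `N`
    ∃ β : ℝ≥0 → ℝ≥0 → ℝ≥0, ClassKL β ∧
      ∀ δ : ℝ≥0, 0 < δ → ∀ Δ : ℝ≥0, δ < Δ → ∃ N₀ : ℕ, 1 ≤ N₀ ∧
        ∀ N : ℕ, N₀ ≤ N → ∀ ξ ∈ X, ω ξ < Δ →
          ∀ t : ℕ, ω (mpcLoop g (uopt N) ξ t) ≤ max (β (ω ξ) (t : ℝ≥0)) δ :=
  mpc_power_transient_practically_stable_general hM hulα holα.1 (fun ξ _ => hsandwich ξ)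
    (fun _ => hq.adm) hc hdecay htransient ha hb hκhat hopt
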